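/- arXiv:2406.10624 — 3 statements merged into one kernel-verified Lean document; each statement's English description precedes it below -/
import Mathlib

section
/- Let C be a regular Ord-category. Then so-morphisms are stable under comma objects: given a comma object square (f/g, π₁: f/g→X, π₂: f/g→Z) for morphisms f: X→Y and g: Z→Y, if g is an so-morphism then the projection π₁ is an so-morphism, and if f is an so-morphism then the projection π₂ is an so-morphism. -/
open CategoryTheory

universe w v u

/-- An `Ord`-enrichment of a category: a preorder on each hom-set,
preserved by composition on both sides. -/
class OrdEnrichment (C : Type u) [Category.{v} C] : Type (max u v) where
  ord : ∀ {X Y : C}, (X ⟶ Y) → (X ⟶ Y) → Prop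
  ord_refl : ∀ {X Y : C} (f : X ⟶ Y), ord f f
  ord_trans : ∀ {X Y : C} {f g h : X ⟶ Y}, ord f g → ord g h → ord f h
  precomp_ord : ∀ {X Y Z : C} (e : X ⟶ Y) {f g : Y ⟶ Z}, ord f g → ord (e ≫ f) (e ≫ g)
  postcomp_ord : ∀ {X Y Z : C} {f g : X ⟶ Y} (h : Y ⟶ Z), ord f g → ord (f ≫ h) (g ≫ h)

/-- The preorder on hom-sets of an `Ord`-category. -/
def homLe {C : Type u} [Category.{v} C] [OrdEnrichment C] {X Y : C} (f g : X ⟶ Y) : Prop :=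
  OrdEnrichment.ord f g

infixl:50 " ≼ " => homLe

section

variable {C : Type u} [Category.{v} C] [OrdEnrichment C]

/-- A full (ff-) morphism. -/
def IsFF {X Y : C} (m : X ⟶ Y) : Prop :=
  ∀ {A : C} (a a' : A ⟶ X), (a ≫ m) ≼ (a' ≫ m) → a ≼ a'

/-- An ff-monomorphism: a full monomorphism. -/
def IsFFMono {X Y : C} (m : X ⟶ Y) : Prop := IsFF m ∧ Mono m

/-- An so-morphism: a morphism left orthogonal to every ff-monomorphism. -/
def IsSO {A B : C} (e : A ⟶ B) : Prop :=
  ∀ {X Y : C} (m : X ⟶ Y), IsFFMono m → ∀ (u : A ⟶ X) (v : B ⟶ Y),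
    u ≫ m = e ≫ v → ∃ d : B ⟶ X, e ≫ d = u ∧ d ≫ m = v

/-- The (strict) comma object square for the ordered pair `(f, g)`. -/
structure IsCommaSq {X Y Z : C} (f : X ⟶ Y) (g : Z ⟶ Y) (P : C)
    (π₁ : P ⟶ X) (π₂ : P ⟶ Z) : Prop where
  le : (π₁ ≫ f) ≼ (π₂ ≫ g)
  lift : ∀ {A : C} (α : A ⟶ X) (β : A ⟶ Z), (α ≫ f) ≼ (β ≫ g) →
    ∃! h : A ⟶ P, h ≫ π₁ = α ∧ h ≫ π₂ = β
  lift_ord : ∀ {A : C} {h h' : A ⟶ P}, (h ≫ π₁) ≼ (h' ≫ π₁) → (h ≫ π₂) ≼ (h' ≫ π₂) → h ≼ h'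

/-- A 2-pullback square (pullback with the `Ord`-enriched universal property). -/
structure Is2Pullback {X Y Z : C} (f : X ⟶ Z) (g : Y ⟶ Z) (P : C)
    (p : P ⟶ X) (q : P ⟶ Y) : Prop where
  comm : p ≫ f = q ≫ g
  lift : ∀ {A : C} (a : A ⟶ X) (b : A ⟶ Y), a ≫ f = b ≫ g →
    ∃! h : A ⟶ P, h ≫ p = a ∧ h ≫ q = b
  lift_ord : ∀ {A : C} {h h' : A ⟶ P}, (h ≫ p) ≼ (h' ≫ p) → (h ≫ q) ≼ (h' ≫ q) → h ≼ h'

/-- A binary 2-product. -/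
structure Is2Product (X Y : C) (P : C) (p : P ⟶ X) (q : P ⟶ Y) : Prop where
  lift : ∀ {A : C} (a : A ⟶ X) (b : A ⟶ Y), ∃! h : A ⟶ P, h ≫ p = a ∧ h ≫ q = b
  lift_ord : ∀ {A : C} {h h' : A ⟶ P}, (h ≫ p) ≼ (h' ≫ p) → (h ≫ q) ≼ (h' ≫ q) → h ≼ h'

/-- A 2-equalizer. -/
structure Is2Equalizer {X Y : C} (f g : X ⟶ Y) (E : C) (i : E ⟶ X) : Prop where
  comm : i ≫ f = i ≫ g
  lift : ∀ {A : C} (a : A ⟶ X), a ≫ f = a ≫ g → ∃! h : A ⟶ E, h ≫ i = a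
  lift_ord : ∀ {A : C} {h h' : A ⟶ E}, (h ≫ i) ≼ (h' ≫ i) → h ≼ h'

/-- A bicoinserter of a parallel pair. -/
structure IsBicoinserter {X A E : C} (a b : X ⟶ A) (e : A ⟶ E) : Prop where
  le : (a ≫ e) ≼ (b ≫ e)
  desc : ∀ {F : C} (f : A ⟶ F), (a ≫ f) ≼ (b ≫ f) →
    ∃ t : E ⟶ F, (e ≫ t) ≼ f ∧ f ≼ (e ≫ t)
  desc_ord : ∀ {F : C} {f f' : A ⟶ F} {t t' : E ⟶ F},
    (e ≫ t) ≼ f → f ≼ (e ≫ t) → (e ≫ t') ≼ f' → f' ≼ (e ≫ t') → f ≼ f' → t ≼ t'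

/-- A relation from `X` to `Y` in an `Ord`-category: a jointly ff-monomorphic span. -/
structure RelStr (X Y : C) : Type (max u v) where
  obj : C
  p : obj ⟶ X
  q : obj ⟶ Y
  jointly_ff : ∀ {A : C} (a a' : A ⟶ obj), (a ≫ p) ≼ (a' ≫ p) → (a ≫ q) ≼ (a' ≫ q) → a ≼ a'
  jointly_mono : ∀ {A : C} (a a' : A ⟶ obj), a ≫ p = a' ≫ p → a ≫ q = a' ≫ q → a = a'

/-- `(x, y) ∈_A R`. -/
def RelStr.Mem {X Y : C} (R : RelStr X Y) {A : C} (x : A ⟶ X) (y : A ⟶ Y) : Prop :=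
  ∃ h : A ⟶ R.obj, h ≫ R.p = x ∧ h ≫ R.q = y

/-- `R ⊆ S`: `R` factors through `S` (over `X × Y`). -/
def RelStr.Sub {X Y : C} (R S : RelStr X Y) : Prop :=
  ∃ φ : R.obj ⟶ S.obj, φ ≫ S.p = R.p ∧ φ ≫ S.q = R.q

/-- `R ≅ S`: mutual factorisation. -/
def RelStr.Iso {X Y : C} (R S : RelStr X Y) : Prop := R.Sub S ∧ S.Sub R

/-- The opposite relation `R°`. -/
def RelStr.op {X Y : C} (R : RelStr X Y) : RelStr Y X where
  obj := R.obj
  p := R.q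
  q := R.p
  jointly_ff := fun a a' h1 h2 => R.jointly_ff a a' h2 h1
  jointly_mono := fun a a' h1 h2 => R.jointly_mono a a' h2 h1

/-- A relation is an (order) ideal when it is closed under lowering the first
coordinate and raising the second coordinate. -/
def IsIdealRel {X Y : C} (R : RelStr X Y) : Prop :=
  ∀ {A : C} (x x' : A ⟶ X) (y y' : A ⟶ Y), x' ≼ x → R.Mem x y → y ≼ y' → R.Mem x' y'

/-- The relation `f_♯` given by the span `(1_X, f)`. -/
def sharpRel {X Y : C} (f : X ⟶ Y) : RelStr X Y where
  obj := X
  p := 𝟙 X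
  q := f
  jointly_ff := fun a a' h1 _ => by simpa using h1
  jointly_mono := fun a a' h1 _ => by simpa using h1

/-- The relation `f°`, the opposite of `f_♯`. -/
def cosharpRel {X Y : C} (f : X ⟶ Y) : RelStr Y X := (sharpRel f).op

/-- `M` is the meet (intersection) `R ∧ S` of two relations. -/
def IsMeetRel {X Y : C} (R S M : RelStr X Y) : Prop :=
  M.Sub R ∧ M.Sub S ∧
    ∀ {A : C} (x : A ⟶ X) (y : A ⟶ Y), R.Mem x y → S.Mem x y → M.Mem x y

/-- `T` is the composite `S ∘ R` of the relations `R : X ↬ Y` and `S : Y ↬ Z`,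
obtained via the (so-morphism, ff-monomorphism) factorisation of the span
given by the 2-pullback over the middle object. -/
def IsCompositeRel {X Y Z : C} (R : RelStr X Y) (S : RelStr Y Z) (T : RelStr X Z) : Prop :=
  ∃ (P : C) (p₁ : P ⟶ R.obj) (p₂ : P ⟶ S.obj) (e : P ⟶ T.obj),
    Is2Pullback R.q S.p P p₁ p₂ ∧ IsSO e ∧ e ≫ T.p = p₁ ≫ R.p ∧ e ≫ T.q = p₂ ≫ S.q

/-- `R` is the ideal `f_* = f / 1_Y : X ↬ Y`. -/
def IsStarRel {X Y : C} (f : X ⟶ Y) (R : RelStr X Y) : Prop :=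
  IsCommaSq f (𝟙 Y) R.obj R.p R.q

/-- `R` is the ideal `f^* = 1_Y / f : Y ↬ X`. -/
def IsCostarRel {X Y : C} (f : X ⟶ Y) (R : RelStr Y X) : Prop :=
  IsCommaSq (𝟙 Y) f R.obj R.p R.q

/-- `R` is the identity ideal `I_X = 1_X / 1_X`. -/
def IsIdRel (X : C) (R : RelStr X X) : Prop :=
  IsCommaSq (𝟙 X) (𝟙 X) R.obj R.p R.q

/-- `S` is the 2-pullback of the relation `R ↣ X × Y` along `f × g`. -/
def IsRelPullback {X Y U V : C} (R : RelStr X Y) (f : U ⟶ X) (g : V ⟶ Y)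
    (S : RelStr U V) : Prop :=
  ∃ h : S.obj ⟶ R.obj, h ≫ R.p = S.p ≫ f ∧ h ≫ R.q = S.q ≫ g ∧
    ∀ {A : C} (a : A ⟶ U) (b : A ⟶ V) (c : A ⟶ R.obj),
      c ≫ R.p = a ≫ f → c ≫ R.q = b ≫ g →
      ∃ d : A ⟶ S.obj, d ≫ S.p = a ∧ d ≫ S.q = b ∧ d ≫ h = c

/-- A binary 2-coproduct. -/
structure Is2Coproduct (X Y : C) (P : C) (i : X ⟶ P) (j : Y ⟶ P) : Prop where
  desc : ∀ {A : C} (a : X ⟶ A) (b : Y ⟶ A), ∃! h : P ⟶ A, i ≫ h = a ∧ j ≫ h = b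
  desc_ord : ∀ {A : C} {h h' : P ⟶ A}, (i ≫ h) ≼ (i ≫ h') → (j ≫ h) ≼ (j ≫ h') → h ≼ h'

/-- A ternary 2-coproduct. -/
structure Is3Coproduct (X Y Z : C) (P : C) (i : X ⟶ P) (j : Y ⟶ P) (k : Z ⟶ P) : Prop where
  desc : ∀ {A : C} (a : X ⟶ A) (b : Y ⟶ A) (c : Z ⟶ A),
    ∃! h : P ⟶ A, i ≫ h = a ∧ j ≫ h = b ∧ k ≫ h = c
  desc_ord : ∀ {A : C} {h h' : P ⟶ A},
    (i ≫ h) ≼ (i ≫ h') → (j ≫ h) ≼ (j ≫ h') → (k ≫ h) ≼ (k ≫ h') → h ≼ h'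

/-- Reflexivity of a relation on `X`: the diagonal factors through it. -/
def ReflexiveRel {X : C} (R : RelStr X X) : Prop := R.Mem (𝟙 X) (𝟙 X)

/-- Transitivity of a relation on `X`: `R ∘ R ⊆ R`. -/
def TransitiveRel {X : C} (R : RelStr X X) : Prop :=
  ∀ T : RelStr X X, IsCompositeRel R R T → T.Sub R

/-- A congruence: a reflexive and transitive ideal. -/
def IsCongruence {X : C} (R : RelStr X X) : Prop :=
  IsIdealRel R ∧ ReflexiveRel R ∧ TransitiveRel R

/-- An effective congruence: `R ≅ f^* ∘ f_*` for some morphism `f`. -/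
def EffectiveCongruence {X : C} (R : RelStr X X) : Prop :=
  ∃ (Y : C) (f : X ⟶ Y) (Fstar : RelStr X Y) (Fco : RelStr Y X) (T : RelStr X X),
    IsStarRel f Fstar ∧ IsCostarRel f Fco ∧ IsCompositeRel Fstar Fco T ∧ R.Iso T

/-- The `Ord`-enriched difunctionality property of a relation. -/
def OrdDifunctional {X Y : C} (D : RelStr X Y) : Prop :=
  ∀ {A : C} (x u u' : A ⟶ X) (y y' v : A ⟶ Y),
    D.Mem x y → y ≼ y' → D.Mem u y' → u ≼ u' → D.Mem u' v → D.Mem x v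

end

/-- A regular `Ord`-category: finite weighted limits, an
(so-morphism, ff-monomorphism) factorisation system, so-morphisms stable under
2-pullbacks, and every so-morphism the bicoinserter of its comma object projections. -/
structure IsRegularOrd (C : Type u) [Category.{v} C] [OrdEnrichment C] : Prop where
  hasTerminal : ∃ T : C, ∀ A : C, ∃ f : A ⟶ T, ∀ g : A ⟶ T, g = f
  has2Products : ∀ X Y : C, ∃ (P : C) (p : P ⟶ X) (q : P ⟶ Y), Is2Product X Y P p q
  has2Equalizers : ∀ {X Y : C} (f g : X ⟶ Y), ∃ (E : C) (i : E ⟶ X), Is2Equalizer f g E i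
  has2Pullbacks : ∀ {X Y Z : C} (f : X ⟶ Z) (g : Y ⟶ Z),
    ∃ (P : C) (p : P ⟶ X) (q : P ⟶ Y), Is2Pullback f g P p q
  hasCommaObjects : ∀ {X Y Z : C} (f : X ⟶ Y) (g : Z ⟶ Y),
    ∃ (P : C) (p : P ⟶ X) (q : P ⟶ Z), IsCommaSq f g P p q
  fact : ∀ {X Y : C} (f : X ⟶ Y), ∃ (I : C) (e : X ⟶ I) (m : I ⟶ Y),
    IsSO e ∧ IsFFMono m ∧ e ≫ m = f
  so_pullback_stable : ∀ {X Y Z P : C} (f : X ⟶ Z) (g : Y ⟶ Z) (p : P ⟶ X) (q : P ⟶ Y),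
    Is2Pullback f g P p q → IsSO g → IsSO p
  so_bicoinserter : ∀ {A B P : C} (e : A ⟶ B), IsSO e →
    ∀ (π₁ π₂ : P ⟶ A), IsCommaSq e e P π₁ π₂ → IsBicoinserter π₁ π₂ e

/-- An `Ord`-Mal'tsev category: every ideal is `Ord`-difunctional. -/
def IsOrdMaltsev (C : Type u) [Category.{v} C] [OrdEnrichment C] : Prop :=
  ∀ (X Y : C) (D : RelStr X Y), IsIdealRel D → OrdDifunctional D

/-- An `Ord`-W-Mal'tsev object: every ideal is `Ord`-difunctional with respect to
generalised elements with domain `Y`. -/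
def IsOrdWMaltsevObj {C : Type u} [Category.{v} C] [OrdEnrichment C] (Y : C) : Prop :=
  ∀ (X Z : C) (R : RelStr X Z), IsIdealRel R →
    ∀ (x u u' : Y ⟶ X) (z z' v : Y ⟶ Z),
      R.Mem x z → z ≼ z' → R.Mem u z' → u ≼ u' → R.Mem u' v → R.Mem x v



theorem so_of_section {C : Type u} [Category.{v} C] [OrdEnrichment C] {A B : C} (e : A ⟶ B)
    (s : B ⟶ A) (hs : s ≫ e = 𝟙 B) : IsSO e := by
  intro U V m hm a b hab
  have hmono : Mono m := hm.2
  have key : (s ≫ a) ≫ m = b := by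
    rw [Category.assoc, hab, ← Category.assoc, hs, Category.id_comp]
  refine ⟨s ≫ a, ?_, key⟩
  rw [← cancel_mono m, Category.assoc, key, hab]

theorem so_comp {C : Type u} [Category.{v} C] [OrdEnrichment C] {A B D : C} (e : A ⟶ B)
    (e' : B ⟶ D) (he : IsSO e) (he' : IsSO e') : IsSO (e ≫ e') := by
  intro U V m hm a b hab
  obtain ⟨d, hd, hd'⟩ := he m hm a (e' ≫ b) (by rw [hab, Category.assoc])
  obtain ⟨k, hk, hk'⟩ := he' m hm d b hd'
  exact ⟨k, by rw [Category.assoc, hk, hd], hk'⟩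

/-- In a regular `Ord`-category, so-morphisms are stable under comma objects. -/
theorem statement1 {C : Type u} [Category.{v} C] [OrdEnrichment C] (hC : IsRegularOrd C)
    {X Y Z P : C} (f : X ⟶ Y) (g : Z ⟶ Y) (π₁ : P ⟶ X) (π₂ : P ⟶ Z)
    (hcomma : IsCommaSq f g P π₁ π₂) :
    (IsSO g → IsSO π₁) ∧ (IsSO f → IsSO π₂) := by
  constructor
  · intro hg
    obtain ⟨Q, q₁, q₂, hQ⟩ := hC.hasCommaObjects f (𝟙 Y)
    obtain ⟨p, ⟨hp₁, hp₂⟩, -⟩ := hQ.lift π₁ (π₂ ≫ g) (by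
      rw [Category.comp_id]; exact hcomma.le)
    obtain ⟨s, ⟨hs, -⟩, -⟩ := hQ.lift (𝟙 X) f (by
      rw [Category.comp_id, Category.id_comp]; exact OrdEnrichment.ord_refl f)
    have hle : (q₁ ≫ f) ≼ q₂ := by
      have := hQ.le
      rwa [Category.comp_id] at this
    have hpb : Is2Pullback q₂ g P p π₂ := by
      refine ⟨hp₂, ?_, ?_⟩
      · intro A a b hab
        have h0 : ((a ≫ q₁) ≫ f) ≼ (b ≫ g) := by
          rw [← hab, Category.assoc]
          exact OrdEnrichment.precomp_ord a hle
        obtain ⟨h, ⟨h1, h2⟩, hu⟩ := hcomma.lift (a ≫ q₁) b h0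
        refine ⟨h, ⟨?_, h2⟩, ?_⟩
        · have hle' : ((a ≫ q₁) ≫ f) ≼ ((a ≫ q₂) ≫ 𝟙 Y) := by
            rw [Category.comp_id, hab]; exact h0
          refine (hQ.lift (a ≫ q₁) (a ≫ q₂) hle').unique ⟨?_, ?_⟩ ⟨rfl, rfl⟩
          · rw [Category.assoc, hp₁, h1]
          · rw [Category.assoc, hp₂, ← Category.assoc, h2, hab]
        · rintro k ⟨hk1, hk2⟩
          exact hu k ⟨by rw [← hk1, Category.assoc, hp₁], hk2⟩
      · intro A h h' h1 h2
        refine hcomma.lift_ord ?_ h2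
        rw [← hp₁, ← Category.assoc, ← Category.assoc]
        exact OrdEnrichment.postcomp_ord q₁ h1
    have : IsSO (p ≫ q₁) := so_comp p q₁ (hC.so_pullback_stable _ _ _ _ hpb hg) (so_of_section q₁ s hs)
    rwa [hp₁] at this
  · intro hf
    obtain ⟨Q, q₁, q₂, hQ⟩ := hC.hasCommaObjects (𝟙 Y) g
    obtain ⟨p, ⟨hp₁, hp₂⟩, -⟩ := hQ.lift (π₁ ≫ f) π₂ (by
      rw [Category.comp_id]; exact hcomma.le)
    obtain ⟨s, ⟨-, hs⟩, -⟩ := hQ.lift g (𝟙 Z) (by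
      rw [Category.comp_id, Category.id_comp]; exact OrdEnrichment.ord_refl g)
    have hle : q₁ ≼ (q₂ ≫ g) := by
      have := hQ.le
      rwa [Category.comp_id] at this
    have hpb : Is2Pullback q₁ f P p π₁ := by
      refine ⟨hp₁, ?_, ?_⟩
      · intro A a b hab
        have h0 : (b ≫ f) ≼ ((a ≫ q₂) ≫ g) := by
          rw [← hab, Category.assoc]
          exact OrdEnrichment.precomp_ord a hle
        obtain ⟨h, ⟨h1, h2⟩, hu⟩ := hcomma.lift b (a ≫ q₂) h0
        refine ⟨h, ⟨?_, h1⟩, ?_⟩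
        · have hle' : ((a ≫ q₁) ≫ 𝟙 Y) ≼ ((a ≫ q₂) ≫ g) := by
            rw [Category.comp_id, hab]; exact h0
          refine (hQ.lift (a ≫ q₁) (a ≫ q₂) hle').unique ⟨?_, ?_⟩ ⟨rfl, rfl⟩
          · rw [Category.assoc, hp₁, ← Category.assoc, h1, hab]
          · rw [Category.assoc, hp₂, h2]
        · rintro k ⟨hk1, hk2⟩
          exact hu k ⟨hk2, by rw [← hk1, Category.assoc, hp₂]⟩
      · intro A h h' h1 h2
        refine hcomma.lift_ord h2 ?_
        rw [← hp₂, ← Category.assoc, ← Category.assoc]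
        exact OrdEnrichment.postcomp_ord q₂ h1
    have : IsSO (p ≫ q₂) := so_comp p q₂ (hC.so_pullback_stable _ _ _ _ hpb hf) (so_of_section q₂ s hs)
    rwa [hp₂] at this
end

section
/- Let C be a regular Ord-category. For ideals R: X ↬ Y, S: Y ↬ Z and T: X ↬ Z, the enriched modular laws hold: (S∘R) ∧ T ⊆ S∘(R ∧ (S^*∘T)) and (S∘R) ∧ T ⊆ (S ∧ (T∘R^*))∘R. -/
open CategoryTheory

universe w v u

infixl:50 " ≼ " => homLe

theorem mem_comp_of_mem {C : Type u} [Category.{v} C] [OrdEnrichment C] {X Y Z A : C}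
    {R : RelStr X Y} {S : RelStr Y Z} {T : RelStr X Z} (h : IsCompositeRel R S T)
    {x : A ⟶ X} {y : A ⟶ Y} {z : A ⟶ Z} (hr : R.Mem x y) (hs : S.Mem y z) : T.Mem x z := by
  obtain ⟨P, p₁, p₂, e, hP, -, e1, e2⟩ := h
  obtain ⟨r, rfl, hry⟩ := hr
  obtain ⟨s, hsy, rfl⟩ := hs
  obtain ⟨k, ⟨k1, k2⟩, -⟩ := hP.lift r s (hry.trans hsy.symm)
  exact ⟨k ≫ e, by rw [Category.assoc, e1, ← Category.assoc, k1],
    by rw [Category.assoc, e2, ← Category.assoc, k2]⟩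

theorem mem_of_so {C : Type u} [Category.{v} C] [OrdEnrichment C] (hC : IsRegularOrd C)
    {X Y A B : C} (R : RelStr X Y) {e : A ⟶ B} (he : IsSO e) {x : B ⟶ X} {y : B ⟶ Y}
    (h : R.Mem (e ≫ x) (e ≫ y)) : R.Mem x y := by
  obtain ⟨P, p, q, hP⟩ := hC.has2Products X Y
  obtain ⟨m, ⟨m1, m2⟩, -⟩ := hP.lift R.p R.q
  obtain ⟨w, ⟨w1, w2⟩, -⟩ := hP.lift x y
  obtain ⟨r, r1, r2⟩ := h
  have hm : IsFFMono m := by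
    constructor
    · intro A a a' h
      apply R.jointly_ff
      · have := OrdEnrichment.postcomp_ord p h
        simpa only [homLe, Category.assoc, m1] using this
      · have := OrdEnrichment.postcomp_ord q h
        simpa only [homLe, Category.assoc, m2] using this
    · constructor
      intro A a a' h
      apply R.jointly_mono
      · rw [← m1, ← Category.assoc, h, Category.assoc]
      · rw [← m2, ← Category.assoc, h, Category.assoc]
  have hsq : r ≫ m = e ≫ w := by
    obtain ⟨_, -, hu⟩ := hP.lift (e ≫ x) (e ≫ y)
    rw [hu (r ≫ m) ⟨by rw [Category.assoc, m1, r1], by rw [Category.assoc, m2, r2]⟩,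
      hu (e ≫ w) ⟨by rw [Category.assoc, w1], by rw [Category.assoc, w2]⟩]
  obtain ⟨d, -, d2⟩ := he m hm r w hsq
  exact ⟨d, by rw [← m1, ← Category.assoc, d2, w1], by rw [← m2, ← Category.assoc, d2, w2]⟩

theorem mem_upper {C : Type u} [Category.{v} C] [OrdEnrichment C]
    {Y Z A : C} {S : RelStr Y Z} {S1star : RelStr S.obj Y} (hS1star : IsStarRel S.p S1star)
    {S2co : RelStr Z S.obj} (hS2co : IsCostarRel S.q S2co)
    {Supper : RelStr Z Y} (hSupper : IsCompositeRel S2co S1star Supper)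
    {y : A ⟶ Y} {z : A ⟶ Z} (h : S.Mem y z) : Supper.Mem z y := by
  obtain ⟨s, rfl, rfl⟩ := h
  refine mem_comp_of_mem hSupper (y := s) ?_ ?_
  · exact (hS2co.lift (s ≫ S.q) s (by
      rw [Category.comp_id]; exact OrdEnrichment.ord_refl _)).exists
  · exact (hS1star.lift s (s ≫ S.p) (by
      rw [Category.comp_id]; exact OrdEnrichment.ord_refl _)).exists

/-- The enriched modular laws for ideals. -/
theorem statement8 {C : Type u} [Category.{v} C] [OrdEnrichment C] (hC : IsRegularOrd C)
    {X Y Z : C} (R : RelStr X Y) (hR : IsIdealRel R)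
    (S : RelStr Y Z) (hS : IsIdealRel S)
    (T : RelStr X Z) (hT : IsIdealRel T)
    (SR : RelStr X Z) (hSR : IsCompositeRel R S SR)
    (M1 : RelStr X Z) (hM1 : IsMeetRel SR T M1)
    -- `S^* = (s₁)_* ∘ (s₂)^*`
    (S1star : RelStr S.obj Y) (hS1star : IsStarRel S.p S1star)
    (S2co : RelStr Z S.obj) (hS2co : IsCostarRel S.q S2co)
    (Supper : RelStr Z Y) (hSupper : IsCompositeRel S2co S1star Supper)
    -- `S^* ∘ T`
    (ST : RelStr X Y) (hST : IsCompositeRel T Supper ST)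
    (M2 : RelStr X Y) (hM2 : IsMeetRel R ST M2)
    (W1 : RelStr X Z) (hW1 : IsCompositeRel M2 S W1)
    -- `R^* = (r₁)_* ∘ (r₂)^*`
    (R1star : RelStr R.obj X) (hR1star : IsStarRel R.p R1star)
    (R2co : RelStr Y R.obj) (hR2co : IsCostarRel R.q R2co)
    (Rupper : RelStr Y X) (hRupper : IsCompositeRel R2co R1star Rupper)
    -- `T ∘ R^*`
    (TR : RelStr Y Z) (hTR : IsCompositeRel Rupper T TR)
    (M3 : RelStr Y Z) (hM3 : IsMeetRel S TR M3)
    (W2 : RelStr X Z) (hW2 : IsCompositeRel R M3 W2) :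
    M1.Sub W1 ∧ M1.Sub W2 := by
  obtain ⟨P, p₁, p₂, e, hP, he, e1, e2⟩ := hSR
  obtain ⟨⟨φ, φ1, φ2⟩, ⟨ψ, ψ1, ψ2⟩, -⟩ := hM1
  obtain ⟨Q, c, d, hQ⟩ := hC.has2Pullbacks φ e
  have hc : IsSO c := hC.so_pullback_stable φ e c d hQ he
  have hx : c ≫ M1.p = (d ≫ p₁) ≫ R.p := by
    rw [← φ1, ← Category.assoc, hQ.comm, Category.assoc, e1, Category.assoc]
  have hz : c ≫ M1.q = (d ≫ p₂) ≫ S.q := by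
    rw [← φ2, ← Category.assoc, hQ.comm, Category.assoc, e2, Category.assoc]
  have hRm : R.Mem (c ≫ M1.p) ((d ≫ p₁) ≫ R.q) := ⟨d ≫ p₁, hx.symm, rfl⟩
  have hSm : S.Mem ((d ≫ p₁) ≫ R.q) (c ≫ M1.q) :=
    ⟨d ≫ p₂, by rw [Category.assoc, Category.assoc, hP.comm], hz.symm⟩
  have hTm : T.Mem (c ≫ M1.p) (c ≫ M1.q) :=
    ⟨c ≫ ψ, by rw [Category.assoc, ψ1], by rw [Category.assoc, ψ2]⟩
  constructor
  · apply mem_of_so hC W1 hc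
    exact mem_comp_of_mem hW1 (hM2.2.2 _ _ hRm
      (mem_comp_of_mem hST hTm (mem_upper hS1star hS2co hSupper hSm))) hSm
  · apply mem_of_so hC W2 hc
    exact mem_comp_of_mem hW2 hRm (hM3.2.2 _ _ hSm
      (mem_comp_of_mem hTR (mem_upper hR1star hR2co hRupper hRm) hTm))
end

section
/- Let C be a Mal'tsev category. Then any Ord-enrichment of C (any preorder on the hom-sets preserved by composition) makes C an Ord-Mal'tsev category. -/
open CategoryTheory

universe w v u

infixl:50 " ≼ " => homLe

/-- An ordinary relation in a (1-dimensional) category: a jointly monomorphic span. -/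
structure OrdinaryRel {C : Type u} [Category.{v} C] (X Y : C) : Type (max u v) where
  obj : C
  p : obj ⟶ X
  q : obj ⟶ Y
  jointly_mono : ∀ {A : C} (a a' : A ⟶ obj), a ≫ p = a' ≫ p → a ≫ q = a' ≫ q → a = a'

def OrdinaryRel.Mem {C : Type u} [Category.{v} C] {X Y : C} (R : OrdinaryRel X Y)
    {A : C} (x : A ⟶ X) (y : A ⟶ Y) : Prop :=
  ∃ h : A ⟶ R.obj, h ≫ R.p = x ∧ h ≫ R.q = y

/-- A Mal'tsev category: every ordinary relation is difunctional. -/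
def IsMaltsevCat (C : Type u) [Category.{v} C] : Prop :=
  ∀ (X Y : C) (D : OrdinaryRel X Y) (W : C) (x u : W ⟶ X) (y v : W ⟶ Y),
    D.Mem x y → D.Mem u y → D.Mem u v → D.Mem x v

/-- Any `Ord`-enrichment of a Mal'tsev category is an `Ord`-Mal'tsev category. -/
theorem statement12 (C : Type u) [Category.{v} C] [OrdEnrichment C]
    (hM : IsMaltsevCat C) : IsOrdMaltsev C := by
  intro X Y D hD A x u u' y y' v hxy hy huy hu huv
  exact hM X Y ⟨D.obj, D.p, D.q, D.jointly_mono⟩ A x u y' v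
    (hD x x y y' (OrdEnrichment.ord_refl x) hxy hy) huy
    (hD u' u v v hu huv (OrdEnrichment.ord_refl v))
end
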